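/- arXiv:1409.6466 — 11 statements merged into one kernel-verified Lean document; each statement's English description precedes it below -/
import Mathlib

section
/- Let S be a finite nonempty set and P : S × S → [0,1]. For every s ∈ S, r_P(s) = max_{t ∈ S} min( P⁺(s,t), P⁺(t,t) ), where P⁺ is the max–min transitive closure of P. -/
/-!
Upper bound: by pigeonhole a run `σ` from `s` visits some state `t` at two different positive
times, so a prefix of `σ` is a path from `s` to `t` and a later segment is a loop at `t`; both
have value at least `valP P σ`.

Lower bound: fix `a < min (Pplus P s t) (Pplus P t t)` and let `R x y` mean `a ≤ P x y`. Then `t`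
is reachable from `s` and from itself by nonempty `R`-paths. The set of states from which `t` is
so reachable contains `s`, and each of its members has an `R`-successor inside it, so `R` has an
infinite path from `s`, whose value is at least `a`. Density of `[0,1]` finishes the argument.
-/

/-- `[0,1]` as a complete lattice. -/
instance : Fact ((0:ℝ) ≤ 1) := ⟨zero_le_one⟩

/-- The value of a run `σ`: `inf_{i ≥ 0} P(σ i, σ (i+1))`. -/
noncomputable def valP {S : Type*} (P : S → S → unitInterval) (σ : ℕ → S) : unitInterval :=
  ⨅ i : ℕ, P (σ i) (σ (i + 1))

/-- `r_P(s)`: the supremum of the values of all runs starting at `s`. -/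
noncomputable def rP {S : Type*} (P : S → S → unitInterval) (s : S) : unitInterval :=
  ⨆ σ : {σ : ℕ → S // σ 0 = s}, valP P σ.1

/-- The max–min transitive closure `P⁺(s,t)`: sup over `n ≥ 1` and sequences
`s = t₀, t₁, …, t_n = t` of `min_{0 ≤ i < n} P(tᵢ, tᵢ₊₁)`. -/
noncomputable def Pplus {S : Type*} (P : S → S → unitInterval) (s t : S) : unitInterval :=
  ⨆ n : ℕ, ⨆ c : {c : Fin (n + 2) → S // c 0 = s ∧ c (Fin.last (n + 1)) = t},
    ⨅ i : Fin (n + 1), P (c.1 i.castSucc) (c.1 i.succ)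

/-- The segment of `σ` from time `i` to time `i + n + 1` witnesses the bound. -/
theorem valP_le_Pplus {S : Type*} (P : S → S → unitInterval) (σ : ℕ → S) (i n : ℕ) :
    valP P σ ≤ Pplus P (σ i) (σ (i + n + 1)) := by
  unfold Pplus
  refine le_iSup_of_le n (le_iSup_of_le ⟨fun k => σ (i + k), by simp, by simp [add_assoc]⟩ ?_)
  refine le_iInf fun k => ?_
  simpa [valP, add_assoc] using iInf_le (fun j : ℕ => P (σ j) (σ (j + 1))) (i + k)

theorem transGen_of_lt_Pplus {S : Type*} (P : S → S → unitInterval) {a : unitInterval} {s t : S}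
    (h : a < Pplus P s t) : Relation.TransGen (fun x y => a ≤ P x y) s t := by
  unfold Pplus at h
  obtain ⟨n, h⟩ := lt_iSup_iff.1 h
  obtain ⟨⟨c, rfl, rfl⟩, h⟩ := lt_iSup_iff.1 h
  have step (i : Fin (n + 1)) : a ≤ P (c i.castSucc) (c i.succ) := h.le.trans (iInf_le _ i)
  have key (i : Fin (n + 1)) : Relation.TransGen (fun x y => a ≤ P x y) (c 0) (c i.succ) := by
    induction i using Fin.induction with
    | zero => exact .single (step 0)
    | succ i ih => exact ih.tail (step i.succ)
  exact key (Fin.last n)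

theorem le_rP_of_transGen {S : Type*} (P : S → S → unitInterval) {a : unitInterval} {s t : S}
    (hst : Relation.TransGen (fun x y => a ≤ P x y) s t)
    (htt : Relation.TransGen (fun x y => a ≤ P x y) t t) : a ≤ rP P s := by
  have next (x : {x // Relation.TransGen (fun x y => a ≤ P x y) x t}) :
      ∃ y : {x // Relation.TransGen (fun x y => a ≤ P x y) x t}, a ≤ P x.1 y.1 := by
    obtain ⟨y, hxy, hyt⟩ := Relation.TransGen.head'_iff.1 x.2
    rcases Relation.reflTransGen_iff_eq_or_transGen.1 hyt with rfl | hyt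
    · exact ⟨⟨_, htt⟩, hxy⟩
    · exact ⟨⟨y, hyt⟩, hxy⟩
  choose f hf using next
  unfold rP
  refine le_iSup_of_le ⟨fun n => (f^[n] ⟨s, hst⟩).1, rfl⟩ (le_iInf fun i => ?_)
  simpa only [Function.iterate_succ_apply'] using hf (f^[i] ⟨s, hst⟩)

theorem rP_eq_sup_Pplus {S : Type*} [Fintype S] [Nonempty S]
    (P : S → S → unitInterval) (s : S) :
    rP P s = ⨆ t : S, min (Pplus P s t) (Pplus P t t) := by
  apply le_antisymm
  · refine iSup_le ?_
    rintro ⟨σ, rfl⟩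
    -- The shift by one makes the prefix ending at the repeated state nonempty.
    obtain ⟨i, j, hij, h⟩ : ∃ i j, i < j ∧ σ (i + 1) = σ (j + 1) := by
      obtain ⟨i, j, hne, h⟩ := Finite.exists_ne_map_eq_of_infinite (fun n : ℕ => σ (n + 1))
      rcases hne.lt_or_gt with hlt | hlt
      · exact ⟨i, j, hlt, h⟩
      · exact ⟨j, i, hlt, h.symm⟩
    obtain ⟨k, rfl⟩ := Nat.exists_eq_add_of_lt hij
    refine le_iSup_of_le (σ (i + 1)) (le_min ?_ ?_)
    · simpa using valP_le_Pplus P σ 0 i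
    · have hk := valP_le_Pplus P σ (i + 1) k
      rwa [show i + 1 + k + 1 = i + k + 1 + 1 by omega, ← h] at hk
  · refine iSup_le fun t => le_of_forall_lt_imp_le_of_dense fun a ha => ?_
    obtain ⟨hst, htt⟩ := lt_min_iff.1 ha
    exact le_rP_of_transGen P (transGen_of_lt_Pplus P hst) (transGen_of_lt_Pplus P htt)
end

section
/- Let S be a finite nonempty set and P : S × S → [0,1]. For every s ∈ S, the supremum defining r_P(s) is attained by an eventually periodic (lasso-shaped) run: there exist a finite sequence s = s₀, s₁, …, s_m and indices i < j with s_i = s_j such that the run σ that follows s₀ … s_{j-1} and then repeats the cycle s_i … s_{j-1} forever satisfies val_P(σ) = r_P(s). -/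
/-- The infimum defining `valP P σ` runs over finitely many values of `P`, so it is attained. -/
lemma valP_mem_range {S : Type*} [Finite S] (P : S → S → unitInterval) (σ : ℕ → S) :
    valP P σ ∈ Set.range (fun p : S × S => P p.1 p.2) := by
  have hsub : Set.range (fun i : ℕ => P (σ i) (σ (i + 1))) ⊆
      Set.range (fun p : S × S => P p.1 p.2) := by
    rintro _ ⟨i, rfl⟩
    exact ⟨(σ i, σ (i + 1)), rfl⟩
  obtain ⟨_, ⟨k, rfl⟩, hk⟩ := Set.exists_min_image
    (Set.range (fun i : ℕ => P (σ i) (σ (i + 1)))) id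
    ((Set.finite_range _).subset hsub) (Set.range_nonempty _)
  have hval : valP P σ = P (σ k) (σ (k + 1)) :=
    le_antisymm (iInf_le _ k) (le_iInf fun i => hk _ ⟨i, rfl⟩)
  exact hsub ⟨k, hval.symm⟩

lemma exists_valP_eq_rP {S : Type*} [Finite S] (P : S → S → unitInterval) (s : S) :
    ∃ σ : ℕ → S, σ 0 = s ∧ valP P σ = rP P s := by
  have : Nonempty {σ : ℕ → S // σ 0 = s} := ⟨⟨fun _ => s, rfl⟩⟩
  have hfin : (Set.range fun σ : {σ : ℕ → S // σ 0 = s} => valP P σ.1).Finite := by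
    refine (Set.finite_range (fun p : S × S => P p.1 p.2)).subset ?_
    rintro _ ⟨σ, rfl⟩
    exact valP_mem_range P σ.1
  obtain ⟨_, ⟨σ, rfl⟩, hmax⟩ := Set.exists_max_image _ id hfin (Set.range_nonempty _)
  exact ⟨σ.1, σ.2, le_antisymm
    (le_iSup (fun σ : {σ : ℕ → S // σ 0 = s} => valP P σ.1) σ)
    (iSup_le fun τ => hmax _ ⟨τ, rfl⟩)⟩

/-- The lasso obtained from `σ` by following `σ 0, …, σ (j - 1)` and then repeating
`σ i, …, σ (j - 1)` forever. -/
def lasso {S : Type*} (σ : ℕ → S) (i j : ℕ) (n : ℕ) : S :=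
  if n < j then σ n else σ (i + (n - j) % (j - i))

/-- Closing the lasso where `σ` revisits a state introduces no new transition. -/
lemma exists_lasso_step {S : Type*} {σ : ℕ → S} {i j : ℕ} (hij : i < j) (h : σ i = σ j) (n : ℕ) :
    ∃ m, lasso σ i j n = σ m ∧ lasso σ i j (n + 1) = σ (m + 1) := by
  rcases lt_trichotomy (n + 1) j with hn | hn | hn
  · exact ⟨n, by simp [lasso, show n < j by omega], by simp [lasso, hn]⟩
  · subst hn
    exact ⟨n, by simp [lasso], by simp [lasso, h]⟩
  · have hr := Nat.mod_lt (n - j) (show 0 < j - i by omega)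
    refine ⟨i + (n - j) % (j - i), by simp [lasso, show ¬ n < j by omega], ?_⟩
    have hsub : n + 1 - j = (n - j) + 1 := by omega
    simp only [lasso, show ¬ n + 1 < j by omega, if_false, hsub]
    rw [← Nat.mod_add_mod]
    rcases Nat.lt_or_ge ((n - j) % (j - i) + 1) (j - i) with hlt | hge
    · rw [Nat.mod_eq_of_lt hlt, add_assoc]
    · -- The end of the cycle: the step `σ (j - 1) → σ i` is the step `σ (j - 1) → σ j`.
      have heq : (n - j) % (j - i) + 1 = j - i := by omega
      rw [add_assoc, heq, Nat.mod_self, add_zero, Nat.add_sub_cancel' hij.le, h]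

/-- The supremum defining `r_P(s)` is attained by a lasso-shaped run: there is a run `σ`
from `s` and indices `i < j` with `σ i = σ j` such that `σ` follows its first `j` states
and then repeats the cycle `σ i, …, σ (j-1)` forever, and `val_P(σ) = r_P(s)`. -/
theorem rP_attained_by_lasso {S : Type*} [Fintype S] [Nonempty S]
    (P : S → S → unitInterval) (s : S) :
    ∃ (σ : ℕ → S) (i j : ℕ), σ 0 = s ∧ i < j ∧ σ i = σ j ∧
      (∀ k : ℕ, σ (j + k) = σ (i + k % (j - i))) ∧ valP P σ = rP P s := by
  obtain ⟨σ, h0, hσ⟩ := exists_valP_eq_rP P s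
  obtain ⟨i, j, hij, h⟩ : ∃ i j, i < j ∧ σ i = σ j := by
    obtain ⟨a, b, hne, hab⟩ := Finite.exists_ne_map_eq_of_infinite σ
    rcases hne.lt_or_gt with hlt | hlt
    · exact ⟨a, b, hlt, hab⟩
    · exact ⟨b, a, hlt, hab.symm⟩
  have hτ0 : lasso σ i j 0 = s := by simp [lasso, show 0 < j by omega, h0]
  refine ⟨lasso σ i j, i, j, hτ0, hij, by simp [lasso, hij], fun k => ?_, le_antisymm ?_ ?_⟩
  · have hr := Nat.mod_lt k (show 0 < j - i by omega)
    simp [lasso, show i + k % (j - i) < j by omega]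
  · exact le_iSup (fun σ : {σ : ℕ → S // σ 0 = s} => valP P σ.1) ⟨lasso σ i j, hτ0⟩
  · rw [← hσ]
    refine le_iInf fun n => ?_
    obtain ⟨m, h1, h2⟩ := exists_lasso_step hij h n
    rw [h1, h2]
    exact iInf_le (fun n => P (σ n) (σ (n + 1))) m
end

section
/- Let S be a finite nonempty set and P : S × S → [0,1]. Then P is normal (i.e. sup_{t ∈ S} P(s,t) = 1 for every s ∈ S) if and only if r_P(s) = 1 for every s ∈ S. -/
/-- `P` is normal (`sup_{t} P(s,t) = 1` for every `s`) iff `r_P(s) = 1` for every `s`. -/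
theorem normal_iff_rP_eq_one {S : Type*} [Fintype S] [Nonempty S]
    (P : S → S → unitInterval) :
    (∀ s : S, (⨆ t : S, P s t) = 1) ↔ (∀ s : S, rP P s = 1) := by
  constructor
  · intro h s
    -- Finiteness makes each supremum attained, so there is a successor map of possibility 1.
    have hmax : ∀ u : S, ∃ t : S, P u t = 1 := fun u => by
      obtain ⟨t, ht⟩ := exists_eq_ciSup_of_finite (f := P u)
      exact ⟨t, ht.trans (h u)⟩
    choose f hf using hmax
    refine le_antisymm unitInterval.le_one' ?_
    -- Iterating the successor map from `s` gives a run of value 1.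
    refine le_trans ?_ (le_iSup (fun σ : {σ : ℕ → S // σ 0 = s} => valP P σ.1)
      ⟨fun n => f^[n] s, rfl⟩)
    refine le_iInf fun i => ?_
    simp only [Function.iterate_succ_apply', hf, le_refl]
  · intro h s
    refine le_antisymm unitInterval.le_one' ?_
    rw [← h s]
    -- The value of a run is at most the possibility of its first step.
    refine iSup_le fun ⟨σ, hσ⟩ => ?_
    refine (iInf_le _ 0).trans ?_
    subst hσ
    exact le_iSup (P (σ 0)) (σ (0 + 1))
end

section
/- Let S be a finite nonempty set, P : S × S → [0,1], and I : S → [0,1]. For every n ≥ 1 and states s₀, s₁, …, s_n ∈ S, sup over all sequences σ : ℕ → S with σ i = sᵢ for 0 ≤ i ≤ n of min( I(s₀), val_P(σ) ) equals min( I(s₀), min_{0 ≤ i < n} P(sᵢ, sᵢ₊₁), r_P(s_n) ); and for n = 0, sup over all σ : ℕ → S with σ 0 = s₀ of min( I(s₀), val_P(σ) ) equals min( I(s₀), r_P(s₀) ). -/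
/-- Possibility of cylinder sets: for `n ≥ 1` and states `s₀, …, s_n`, the sup over all
infinite sequences extending `s₀ … s_n` of `min(I(s₀), val_P(σ))` equals
`min(I(s₀), min_{0≤i<n} P(sᵢ, sᵢ₊₁), r_P(s_n))`; and for `n = 0` it equals
`min(I(s₀), r_P(s₀))`. -/
theorem possibility_of_cylinder {S : Type*} [Fintype S] [Nonempty S]
    (P : S → S → unitInterval) (I : S → unitInterval) :
    (∀ n : ℕ, 1 ≤ n → ∀ c : Fin (n + 1) → S,
      (⨆ σ : {σ : ℕ → S // ∀ i : Fin (n + 1), σ i.val = c i},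
          min (I (c 0)) (valP P σ.1))
        = min (I (c 0))
            (min (⨅ i : Fin n, P (c i.castSucc) (c i.succ)) (rP P (c (Fin.last n)))))
    ∧ (∀ s₀ : S,
      (⨆ σ : {σ : ℕ → S // σ 0 = s₀}, min (I s₀) (valP P σ.1))
        = min (I s₀) (rP P s₀)) := by
  refine ⟨fun n _ c => le_antisymm ?_ ?_, fun s₀ => le_antisymm ?_ ?_⟩
  · refine iSup_le fun ⟨σ, hσ⟩ => min_le_min_left _ (le_min (le_iInf fun i => ?_) ?_)
    · rw [← hσ i.castSucc, ← hσ i.succ]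
      exact iInf_le (fun j : ℕ => P (σ j) (σ (j + 1))) i.val
    -- the tail of `σ` from index `n` is a run from `s_n`
    · have h0 : (fun k => σ (n + k)) 0 = c (Fin.last n) := hσ (Fin.last n)
      refine le_trans ?_ (le_iSup
        (fun τ : {τ : ℕ → S // τ 0 = c (Fin.last n)} => valP P τ.1) ⟨fun k => σ (n + k), h0⟩)
      exact le_iInf fun k => iInf_le (fun j : ℕ => P (σ j) (σ (j + 1))) (n + k)
  · refine le_of_forall_lt fun a ha => ?_
    obtain ⟨hI, ha⟩ := lt_min_iff.1 ha
    obtain ⟨hpre, hr⟩ := lt_min_iff.1 ha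
    obtain ⟨⟨τ, hτ0⟩, hτ⟩ := lt_iSup_iff.1 hr
    -- `σ` follows `c` up to index `n` and the run `τ` afterwards
    let σ : ℕ → S := fun k => if h : k < n + 1 then c ⟨k, h⟩ else τ (k - n)
    have hσ : ∀ i : Fin (n + 1), σ i.val = c i := fun i => dif_pos i.2
    have hσ' : ∀ k, σ (n + k) = τ k := by
      intro k
      rcases Nat.eq_zero_or_pos k with rfl | hk
      · exact (hσ (Fin.last n)).trans hτ0.symm
      · have : ¬ (n + k < n + 1) := by omega
        exact (dif_neg this).trans (congrArg τ (Nat.add_sub_cancel_left n k))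
    refine lt_of_lt_of_le (lt_min hI (lt_min hpre hτ)) (le_trans ?_ (le_iSup
      (fun σ : {σ : ℕ → S // ∀ i : Fin (n + 1), σ i.val = c i} =>
        min (I (c 0)) (valP P σ.1)) ⟨σ, hσ⟩))
    refine min_le_min_left _ (le_iInf fun j => ?_)
    rcases lt_or_ge j n with hj | hj
    · refine (min_le_left _ _).trans ((iInf_le _ (⟨j, hj⟩ : Fin n)).trans (le_of_eq ?_))
      rw [← hσ, ← hσ]
      rfl
    · obtain ⟨k, rfl⟩ := Nat.exists_eq_add_of_le hj
      refine (min_le_right _ _).trans ((iInf_le _ k).trans (le_of_eq ?_))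
      change P (τ k) (τ (k + 1)) = P (σ (n + k)) (σ (n + (k + 1)))
      rw [hσ', hσ']
  · exact iSup_le fun σ => min_le_min_left _
      (le_iSup (fun τ : {τ : ℕ → S // τ 0 = s₀} => valP P τ.1) σ)
  · refine le_of_forall_lt fun a ha => ?_
    obtain ⟨hI, hr⟩ := lt_min_iff.1 ha
    obtain ⟨τ, hτ⟩ := lt_iSup_iff.1 hr
    exact lt_iSup_iff.2 ⟨τ, lt_min hI hτ⟩
end

section
/- Let S be a finite nonempty set, P : S × S → [0,1], and b : S → [0,1]. For every s ∈ S, sup over all runs σ from s of min( val_P(σ), b(σ 1) ) equals max_{t ∈ S} min( P(s,t), b(t), r_P(t) ). -/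
theorem valP_eq_min_tail {S : Type*} (P : S → S → unitInterval) (σ : ℕ → S) :
    valP P σ = min (P (σ 0) (σ 1)) (valP P fun i => σ (i + 1)) := by
  unfold valP
  apply le_antisymm
  · exact le_min (iInf_le (fun i => P (σ i) (σ (i + 1))) 0)
      (le_iInf fun i => iInf_le (fun i => P (σ i) (σ (i + 1))) (i + 1))
  · refine le_iInf fun i => ?_
    cases i with
    | zero => exact min_le_left _ _
    | succ i =>
      exact (min_le_right _ _).trans (iInf_le (fun i => P (σ (i + 1)) (σ (i + 1 + 1))) i)

/-- Semantics of the next-step operator: the sup over all runs `σ` from `s` of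
`min(val_P(σ), b(σ 1))` equals `max_{t ∈ S} min(P(s,t), b(t), r_P(t))`. -/
theorem next_step_semantics {S : Type*} [Fintype S] [Nonempty S]
    (P : S → S → unitInterval) (b : S → unitInterval) (s : S) :
    (⨆ σ : {σ : ℕ → S // σ 0 = s}, min (valP P σ.1) (b (σ.1 1)))
      = ⨆ t : S, min (P s t) (min (b t) (rP P t)) := by
  apply le_antisymm
  · refine iSup_le ?_
    rintro ⟨σ, rfl⟩
    refine le_trans ?_ (le_iSup (fun t => min (P (σ 0) t) (min (b t) (rP P t))) (σ 1))
    have htail : valP P (fun i => σ (i + 1)) ≤ rP P (σ 1) :=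
      le_iSup (fun τ : {τ : ℕ → S // τ 0 = σ 1} => valP P τ.1) ⟨fun i => σ (i + 1), rfl⟩
    simp only [valP_eq_min_tail P σ]
    exact le_min ((min_le_left _ _).trans (min_le_left _ _))
      (le_min (min_le_right _ _) (((min_le_left _ _).trans (min_le_right _ _)).trans htail))
  · refine iSup_le fun t => le_of_forall_lt fun c hc => ?_
    obtain ⟨hP, hb, hr⟩ : c < P s t ∧ c < b t ∧ c < rP P t := by
      simpa only [lt_min_iff] using hc
    obtain ⟨⟨τ, rfl⟩, hτ⟩ := lt_iSup_iff.mp hr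
    -- The run `s, τ 0, τ 1, …`.
    let σ : ℕ → S := fun n => Nat.casesOn n s τ
    have hσ : valP P σ = min (P s (τ 0)) (valP P τ) := valP_eq_min_tail P σ
    refine lt_of_lt_of_le ?_ (le_iSup
      (fun σ : {σ : ℕ → S // σ 0 = s} => min (valP P σ.1) (b (σ.1 1))) ⟨σ, rfl⟩)
    change c < min (valP P σ) (b (τ 0))
    rw [hσ]
    exact lt_min (lt_min hP hτ) hb
end

section
/- Let S be a finite nonempty set, P : S × S → [0,1], a, b : S → [0,1], and n ∈ ℕ. For every s ∈ S, sup over all runs σ from s of min( val_P(σ), U_n(σ) ) equals max_{0 ≤ j ≤ n} of [ sup over all finite sequences t₀ = s, t₁, …, t_j in S of min( min_{0 ≤ k < j} min( a(t_k), P(t_k, t_{k+1}) ), b(t_j), r_P(t_j) ) ], where U_n(σ) := max_{0 ≤ j ≤ n} min( min_{0 ≤ k < j} a(σ k), min_{1 ≤ k ≤ j} P(σ(k-1), σ k), b(σ j) ). -/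
/-- `U_n(σ)`: the semantics of the bounded-until formula `Φ ⊔^{≤n} Ψ` on a sequence `σ`,
where `a = ||Φ||` and `b = ||Ψ||`:
`max_{0 ≤ j ≤ n} min( min_{0≤k<j} a(σ k), min_{1≤k≤j} P(σ(k-1), σ k), b(σ j) )`. -/
noncomputable def boundedUntilSem {S : Type*} (P : S → S → unitInterval)
    (a b : S → unitInterval) (n : ℕ) (σ : ℕ → S) : unitInterval :=
  ⨆ j : Fin (n + 1),
    min (⨅ k : Fin j.val, a (σ k.val))
      (min (⨅ k : Fin j.val, P (σ k.val) (σ (k.val + 1))) (b (σ j.val)))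

/-- The value of a run bounds from below the possibility of continuing from each of its states. -/
lemma valP_le_rP {S : Type*} (P : S → S → unitInterval) (σ : ℕ → S) (j : ℕ) :
    valP P σ ≤ rP P (σ j) := by
  refine le_iSup_of_le
    (f := fun τ : {τ : ℕ → S // τ 0 = σ j} => valP P τ.1) ⟨fun i => σ (j + i), rfl⟩ ?_
  exact le_iInf fun i => iInf_le (fun i => P (σ i) (σ (i + 1))) (j + i)

/-- The run that follows the fragment `t₀, …, t_{j-1}` and then `ρ` from time `j` on. The last state
`t_j` is not used, as `ρ 0 = t_j` in the applications. -/
def glue {S : Type*} {j : ℕ} (t : Fin (j + 1) → S) (ρ : ℕ → S) (i : ℕ) : S :=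
  if h : i < j then t ⟨i, h.trans (Nat.lt_succ_self j)⟩ else ρ (i - j)

lemma glue_fin {S : Type*} {j : ℕ} (t : Fin (j + 1) → S) (ρ : ℕ → S)
    (hρ : ρ 0 = t (Fin.last j)) (i : ℕ) (hi : i < j + 1) : glue t ρ i = t ⟨i, hi⟩ := by
  unfold glue
  split_ifs with h
  · rfl
  · obtain rfl : i = j := by omega
    simpa [Fin.last] using hρ

lemma glue_add {S : Type*} {j : ℕ} (t : Fin (j + 1) → S) (ρ : ℕ → S) (i : ℕ) :
    glue t ρ (j + i) = ρ i := by
  simp [glue]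

lemma le_valP_glue {S : Type*} (P : S → S → unitInterval) {j : ℕ} (t : Fin (j + 1) → S)
    (ρ : ℕ → S) (hρ : ρ 0 = t (Fin.last j)) (c : unitInterval)
    (ht : ∀ k : Fin j, c ≤ P (t k.castSucc) (t k.succ)) (hc : c ≤ valP P ρ) :
    c ≤ valP P (glue t ρ) := by
  refine le_iInf fun i => ?_
  rcases lt_or_ge i j with h | h
  · rw [glue_fin t ρ hρ i (by omega), glue_fin t ρ hρ (i + 1) (by omega)]
    exact ht ⟨i, h⟩
  · obtain ⟨m, rfl⟩ := Nat.exists_eq_add_of_le h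
    rw [glue_add, add_assoc, glue_add]
    exact hc.trans (iInf_le _ m)

/-- `Po(s ⊨ Φ ⊔^{≤n} Ψ)`, the sup over runs from `s` of `min(val_P(σ), U_n(σ))`, equals the
max over `0 ≤ j ≤ n` of the sup over finite fragments `t₀ = s, …, t_j` of
`min( min_{0≤k<j} min(a(t_k), P(t_k, t_{k+1})), b(t_j), r_P(t_j) )`. -/
theorem bounded_until_semantics {S : Type*} [Fintype S] [Nonempty S]
    (P : S → S → unitInterval) (a b : S → unitInterval) (n : ℕ) (s : S) :
    (⨆ σ : {σ : ℕ → S // σ 0 = s}, min (valP P σ.1) (boundedUntilSem P a b n σ.1))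
      = ⨆ j : Fin (n + 1), ⨆ t : {t : Fin (j.val + 1) → S // t 0 = s},
          min (⨅ k : Fin j.val, min (a (t.1 k.castSucc)) (P (t.1 k.castSucc) (t.1 k.succ)))
            (min (b (t.1 (Fin.last j.val))) (rP P (t.1 (Fin.last j.val)))) := by
  apply le_antisymm
  · refine iSup_le fun σ => ?_
    unfold boundedUntilSem
    rw [inf_iSup_eq]
    refine iSup_le fun j => le_iSup_of_le j
      (le_iSup_of_le ⟨fun k => σ.1 k.val, σ.2⟩ (le_min (le_iInf fun k => le_min ?_ ?_)
        (le_min ?_ ?_)))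
    · exact (min_le_right _ _).trans ((min_le_left _ _).trans (iInf_le _ k))
    · exact (min_le_left _ _).trans (iInf_le _ k.val)
    · exact (min_le_right _ _).trans ((min_le_right _ _).trans (min_le_right _ _))
    · exact (min_le_left _ _).trans (valP_le_rP P σ.1 j.val)
  · refine iSup_le fun j => iSup_le fun t => ?_
    obtain ⟨t, h0⟩ := t
    unfold rP
    rw [inf_iSup_eq, inf_iSup_eq]
    refine iSup_le fun ρ => ?_
    obtain ⟨ρ, hρ⟩ := ρ
    dsimp only
    generalize hc : min (⨅ k : Fin j.val, min (a (t k.castSucc)) (P (t k.castSucc) (t k.succ)))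
      (min (b (t (Fin.last j.val))) (valP P ρ)) = c
    have hk : ∀ k : Fin j.val, c ≤ min (a (t k.castSucc)) (P (t k.castSucc) (t k.succ)) :=
      fun k => hc ▸ (min_le_left _ _).trans (iInf_le _ k)
    have hb : c ≤ b (t (Fin.last j.val)) := hc ▸ (min_le_right _ _).trans (min_le_left _ _)
    have hv : c ≤ valP P ρ := hc ▸ (min_le_right _ _).trans (min_le_right _ _)
    have hP := fun k => (hk k).trans (min_le_right _ _)
    refine le_iSup_of_le ⟨glue t ρ, (glue_fin t ρ hρ 0 (by omega)).trans h0⟩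
      (le_min (le_valP_glue P t ρ hρ c hP hv)
        (le_iSup_of_le j (le_min (le_iInf fun k => ?_) (le_min (le_iInf fun k => ?_) ?_))))
    · dsimp only
      rw [glue_fin t ρ hρ k.val (by omega)]
      exact (hk k).trans (min_le_left _ _)
    · dsimp only
      rw [glue_fin t ρ hρ k.val (by omega), glue_fin t ρ hρ (k.val + 1) (by omega)]
      exact hP k
    · dsimp only
      rw [glue_fin t ρ hρ j.val (by omega)]
      exact hb
end

section
/- Let S be a finite nonempty set with N = |S|, P : S × S → [0,1], and a, b : S → [0,1]. For s ∈ S and n ∈ ℕ define PoU_n(s) := max_{0 ≤ j ≤ n} of [ sup over all finite sequences t₀ = s, t₁, …, t_j in S of min( min_{0 ≤ k < j} min( a(t_k), P(t_k, t_{k+1}) ), b(t_j), r_P(t_j) ) ]. Then for every n ≥ N and every s ∈ S, PoU_n(s) = PoU_N(s); consequently the unbounded quantity sup_{j ∈ ℕ} [ sup over t₀ = s, …, t_j of min( min_{k<j} min( a(t_k), P(t_k, t_{k+1}) ), b(t_j), r_P(t_j) ) ] equals PoU_N(s). -/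
/-- The sup over finite fragments `t₀ = s, …, t_j` of length `j` of
`min( min_{0≤k<j} min(a(t_k), P(t_k, t_{k+1})), b(t_j), r_P(t_j) )`. -/
noncomputable def untilFrag {S : Type*} (P : S → S → unitInterval)
    (a b : S → unitInterval) (j : ℕ) (s : S) : unitInterval :=
  ⨆ t : {t : Fin (j + 1) → S // t 0 = s},
    min (⨅ k : Fin j, min (a (t.1 k.castSucc)) (P (t.1 k.castSucc) (t.1 k.succ)))
      (min (b (t.1 (Fin.last j))) (rP P (t.1 (Fin.last j))))

/-- `PoU_n(s) = Po(s ⊨ Φ ⊔^{≤n} Ψ)`: the max over `0 ≤ j ≤ n` of `untilFrag`. -/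
noncomputable def PoU {S : Type*} (P : S → S → unitInterval)
    (a b : S → unitInterval) (n : ℕ) (s : S) : unitInterval :=
  ⨆ j : Fin (n + 1), untilFrag P a b j s

/-- Every walk of a relation on a finite type can be shortened to one with the same end points and
fewer than `|S|` steps, by repeatedly removing cycles. Walks are indexed by `ℕ`; only the
first `j + 1` entries matter. -/
theorem exists_short_walk {S : Type*} [Fintype S] (R : S → S → Prop) (j : ℕ) (t : ℕ → S)
    (ht : ∀ k < j, R (t k) (t (k + 1))) :
    ∃ m < Fintype.card S, ∃ u : ℕ → S, u 0 = t 0 ∧ u m = t j ∧ ∀ k < m, R (u k) (u (k + 1)) := by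
  induction j using Nat.strong_induction_on generalizing t with
  | _ j ih =>
    by_cases hj : j < Fintype.card S
    · exact ⟨j, hj, t, rfl, rfl, ht⟩
    -- Two of the `j + 1 > |S|` states coincide.
    obtain ⟨i, l, hil, hlj, heq⟩ : ∃ i l : ℕ, i < l ∧ l ≤ j ∧ t i = t l := by
      obtain ⟨x, y, hxy, h⟩ := Fintype.exists_ne_map_eq_of_card_lt
        (fun k : Fin (j + 1) => t k) (by simp; omega)
      have hne : (x : ℕ) ≠ y := fun h' => hxy (Fin.ext h')
      rcases lt_or_gt_of_ne hne with h' | h'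
      · exact ⟨x, y, h', by omega, h⟩
      · exact ⟨y, x, h', by omega, h.symm⟩
    obtain ⟨m, hm, u, hu0, hum, hu⟩ := ih (j - (l - i)) (by omega)
      (fun k => if k ≤ i then t k else t (k + (l - i))) (by
        intro k hk
        rcases lt_trichotomy k i with h | h | h
        · simpa [h.le, Nat.succ_le_of_lt h] using ht k (by omega)
        · -- At the junction, the step leaving `t l` starts from `t i = t l`.
          subst h
          have h1 : k + 1 + (l - k) = l + 1 := by omega
          simpa [h1, heq] using ht l (by omega)
        · have h1 : k + 1 + (l - i) = k + (l - i) + 1 := by omega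
          have h2 : ¬ k ≤ i := by omega
          have h3 : ¬ k + 1 ≤ i := by omega
          simpa only [h1, h2, h3, if_false] using ht (k + (l - i)) (by omega))
    refine ⟨m, hm, u, by simpa using hu0, ?_, hu⟩
    rw [hum]
    split_ifs with h
    · have h1 : j - (l - i) = i := by omega
      have h2 : l = j := by omega
      rw [h1, heq, h2]
    · congr 1
      omega

theorem untilFrag_le_PoU_card {S : Type*} [Fintype S] (P : S → S → unitInterval)
    (a b : S → unitInterval) (j : ℕ) (s : S) :
    untilFrag P a b j s ≤ PoU P a b (Fintype.card S) s := by
  refine iSup_le ?_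
  rintro ⟨t, rfl⟩
  set c := min (⨅ k : Fin j, min (a (t k.castSucc)) (P (t k.castSucc) (t k.succ)))
      (min (b (t (Fin.last j))) (rP P (t (Fin.last j)))) with hc
  -- The fragment is continued constantly beyond index `j` to give a sequence on `ℕ`.
  obtain ⟨m, hm, u, hu0, hum, hu⟩ := exists_short_walk
    (fun x y => c ≤ min (a x) (P x y)) j (fun n => t ⟨min n j, by omega⟩) (by
      intro k hk
      have h : c ≤ min (a (t (Fin.castSucc ⟨k, hk⟩)))
          (P (t (Fin.castSucc ⟨k, hk⟩)) (t (Fin.succ ⟨k, hk⟩))) :=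
        (min_le_left _ _).trans (iInf_le (fun k : Fin j =>
          min (a (t k.castSucc)) (P (t k.castSucc) (t k.succ))) ⟨k, hk⟩)
      have h1 : (⟨min k j, by omega⟩ : Fin (j + 1)) = Fin.castSucc ⟨k, hk⟩ :=
        Fin.ext (by simp; omega)
      have h2 : (⟨min (k + 1) j, by omega⟩ : Fin (j + 1)) = Fin.succ ⟨k, hk⟩ :=
        Fin.ext (by simp; omega)
      simpa only [h1, h2] using h)
  have hum' : u m = t (Fin.last j) := by
    rw [hum]; congr 1; exact Fin.ext (by simp)
  have hu0' : u 0 = t 0 := by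
    rw [hu0]; congr 1
  have hfrag : c ≤ untilFrag P a b m (t 0) := by
    refine le_trans ?_ (le_iSup (fun v : {v : Fin (m + 1) → S // v 0 = t 0} =>
      min (⨅ k : Fin m, min (a (v.1 k.castSucc)) (P (v.1 k.castSucc) (v.1 k.succ)))
        (min (b (v.1 (Fin.last m))) (rP P (v.1 (Fin.last m)))))
      ⟨fun k => u k, by simpa using hu0'⟩)
    refine le_min (le_iInf fun k => by simpa using hu k k.2) ?_
    simp only [Fin.val_last, hum']
    exact min_le_right _ _
  exact hfrag.trans (le_iSup (fun i : Fin (Fintype.card S + 1) => untilFrag P a b i (t 0))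
    ⟨m, by omega⟩)

/-- The bounded-until possibilities stabilize at `N = |S|`: `PoU_n = PoU_N` for all
`n ≥ N`, and hence the unbounded until possibility equals `PoU_N`. -/
theorem PoU_stabilizes {S : Type*} [Fintype S] [Nonempty S]
    (P : S → S → unitInterval) (a b : S → unitInterval) :
    (∀ n : ℕ, Fintype.card S ≤ n → ∀ s : S, PoU P a b n s = PoU P a b (Fintype.card S) s) ∧
    (∀ s : S, (⨆ j : ℕ, untilFrag P a b j s) = PoU P a b (Fintype.card S) s) := by
  refine ⟨fun n hn s => le_antisymm ?_ ?_, fun s => le_antisymm ?_ ?_⟩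
  · exact iSup_le fun j => untilFrag_le_PoU_card P a b j s
  · exact iSup_le fun j => le_iSup (fun i : Fin (n + 1) => untilFrag P a b i s) ⟨j, by omega⟩
  · exact iSup_le fun j => untilFrag_le_PoU_card P a b j s
  · exact iSup_le fun j => le_iSup (fun i : ℕ => untilFrag P a b i s) j
end

section
/- Let S be a finite nonempty set, P : S × S → [0,1], and a : S → [0,1]. Define A : S → [0,1] by A(s) := sup over all runs σ from s of min( val_P(σ), inf_{i ≥ 0} a(σ i) ). Then A is a fixpoint of the operator f, i.e. for every s ∈ S, A(s) = min( a(s), max_{t ∈ S} min( P(s,t), A(t), r_P(t) ) ). -/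
/-- `A(s) = Po(s ⊨ □Φ)`: the sup over runs `σ` from `s` of
`min(val_P(σ), inf_{i≥0} a(σ i))`, where `a = ||Φ||`. -/
noncomputable def alwaysSem {S : Type*} (P : S → S → unitInterval)
    (a : S → unitInterval) (s : S) : unitInterval :=
  ⨆ σ : {σ : ℕ → S // σ 0 = s}, min (valP P σ.1) (⨅ i : ℕ, a (σ.1 i))

theorem alwaysSem_le_rP {S : Type*} (P : S → S → unitInterval) (a : S → unitInterval) (t : S) :
    alwaysSem P a t ≤ rP P t :=
  iSup_mono fun _ => min_le_left _ _

/-- The value of a run splits into the contributions of its first state, its first transition and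
its tail. -/
theorem runValue_eq {S : Type*} (P : S → S → unitInterval) (a : S → unitInterval) (σ : ℕ → S) :
    min (valP P σ) (⨅ i, a (σ i)) =
      min (a (σ 0)) (min (P (σ 0) (σ 1))
        (min (valP P fun i => σ (i + 1)) (⨅ i, a (σ (i + 1))))) := by
  apply le_antisymm
  · refine le_min ?_ (le_min ?_ (le_min ?_ ?_))
    · exact (min_le_right _ _).trans (iInf_le (fun i => a (σ i)) 0)
    · exact (min_le_left _ _).trans (iInf_le (fun i => P (σ i) (σ (i + 1))) 0)
    · exact (min_le_left _ _).trans
        (le_iInf fun i => iInf_le (fun i => P (σ i) (σ (i + 1))) (i + 1))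
    · exact (min_le_right _ _).trans (le_iInf fun i => iInf_le (fun i => a (σ i)) (i + 1))
  · refine le_min (le_iInf fun i => ?_) (le_iInf fun i => ?_)
    · cases i with
      | zero => exact (min_le_right _ _).trans (min_le_left _ _)
      | succ i =>
        exact (min_le_right _ _).trans ((min_le_right _ _).trans ((min_le_left _ _).trans
          (iInf_le (fun i => P (σ (i + 1)) (σ (i + 1 + 1))) i)))
    · cases i with
      | zero => exact min_le_left _ _
      | succ i =>
        exact (min_le_right _ _).trans ((min_le_right _ _).trans ((min_le_right _ _).trans
          (iInf_le (fun i => a (σ (i + 1))) i)))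

/-- `A` is a fixpoint of the operator
`f(Z)(s) = min( a(s), max_{t} min(P(s,t), Z(t), r_P(t)) )`. -/
theorem alwaysSem_is_fixpoint {S : Type*} [Fintype S] [Nonempty S]
    (P : S → S → unitInterval) (a : S → unitInterval) (s : S) :
    alwaysSem P a s
      = min (a s) (⨆ t : S, min (P s t) (min (alwaysSem P a t) (rP P t))) := by
  have run_le (σ : ℕ → S) : min (valP P σ) (⨅ i, a (σ i)) ≤ alwaysSem P a (σ 0) :=
    le_iSup (fun τ : {τ : ℕ → S // τ 0 = σ 0} => min (valP P τ.1) (⨅ i, a (τ.1 i))) ⟨σ, rfl⟩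
  apply le_antisymm
  · refine iSup_le ?_
    rintro ⟨σ, rfl⟩
    rw [runValue_eq]
    refine min_le_min_left _ (le_iSup_of_le (σ 1) (min_le_min_left _ ?_))
    have tail_le := run_le fun i => σ (i + 1)
    exact le_min tail_le (tail_le.trans (alwaysSem_le_rP P a _))
  · refine le_of_forall_lt fun c hc => ?_
    obtain ⟨hca, hc⟩ := lt_min_iff.1 hc
    obtain ⟨t, ht⟩ := lt_iSup_iff.1 hc
    obtain ⟨hcP, ht⟩ := lt_min_iff.1 ht
    obtain ⟨⟨σ, rfl⟩, hσ⟩ := lt_iSup_iff.1 (lt_min_iff.1 ht).1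
    -- Prepending `s` to the run `σ` gives a run from `s` whose value exceeds `c`.
    refine lt_of_lt_of_le ?_ (run_le fun n => Nat.casesOn n s σ)
    rw [runValue_eq]
    exact lt_min hca (lt_min hcP hσ)
end

section
/- Let S be a finite nonempty set, P : S × S → [0,1], and a : S → [0,1]. Define A : S → [0,1] by A(s) := sup over all runs σ from s of min( val_P(σ), inf_{i ≥ 0} a(σ i) ). If Z : S → [0,1] satisfies Z(s) = min( a(s), max_{t ∈ S} min( P(s,t), Z(t), r_P(t) ) ) for every s ∈ S, then Z(s) ≤ A(s) for every s ∈ S; hence A is the greatest fixpoint of the operator f. -/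
/-- The operator `f(Z)(s) = min( a(s), max_{t} min(P(s,t), Z(t), r_P(t)) )`. -/
noncomputable def fOp {S : Type*} [Fintype S] (P : S → S → unitInterval)
    (a : S → unitInterval) (Z : S → unitInterval) : S → unitInterval :=
  fun s => min (a s) (⨆ t : S, min (P s t) (min (Z t) (rP P t)))

theorem fOp_mono {S : Type*} [Fintype S] (P : S → S → unitInterval) (a : S → unitInterval)
    {Z W : S → unitInterval} (h : ∀ s, Z s ≤ W s) (s : S) : fOp P a Z s ≤ fOp P a W s :=
  min_le_min le_rfl (iSup_mono fun t => min_le_min le_rfl (min_le_min (h t) le_rfl))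

theorem le_alwaysSem_of_le_fOp {S : Type*} [Fintype S]
    (P : S → S → unitInterval) (a : S → unitInterval) (Z : S → unitInterval)
    (h : ∀ s, Z s ≤ fOp P a Z s) (s : S) : Z s ≤ alwaysSem P a s := by
  have hsucc : ∀ s, ∃ t, Z s ≤ P s t ∧ Z s ≤ Z t := by
    intro s
    have : Nonempty S := ⟨s⟩
    obtain ⟨t, ht⟩ :=
      exists_eq_ciSup_of_finite (f := fun t : S => min (P s t) (min (Z t) (rP P t)))
    have h1 : Z s ≤ min (P s t) (min (Z t) (rP P t)) :=
      ht ▸ (h s).trans (min_le_right _ _)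
    exact ⟨t, h1.trans (min_le_left _ _),
      h1.trans ((min_le_right _ _).trans (min_le_left _ _))⟩
  choose g hgP hgZ using hsucc
  have hrun : ∀ i : ℕ, Z s ≤ Z (g^[i] s) := by
    intro i
    induction i with
    | zero => exact le_rfl
    | succ n ih =>
      rw [Function.iterate_succ_apply']
      exact ih.trans (hgZ _)
  refine le_trans ?_ (le_iSup
    (fun σ : {σ : ℕ → S // σ 0 = s} => min (valP P σ.1) (⨅ i : ℕ, a (σ.1 i)))
    ⟨fun i => g^[i] s, rfl⟩)
  refine le_min (le_iInf fun i => ?_) (le_iInf fun i => ?_)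
  · simp only [Function.iterate_succ_apply']
    exact (hrun i).trans (hgP _)
  · exact (hrun i).trans ((h _).trans (min_le_left _ _))

theorem alwaysSem_le_fOp {S : Type*} [Fintype S]
    (P : S → S → unitInterval) (a : S → unitInterval) (s : S) :
    alwaysSem P a s ≤ fOp P a (alwaysSem P a) s := by
  refine iSup_le ?_
  rintro ⟨σ, rfl⟩
  have hP : min (valP P σ) (⨅ i : ℕ, a (σ i)) ≤ valP P σ := min_le_left _ _
  have ha : min (valP P σ) (⨅ i : ℕ, a (σ i)) ≤ ⨅ i : ℕ, a (σ i) := min_le_right _ _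
  have htail : valP P σ ≤ valP P (fun i => σ (i + 1)) :=
    le_iInf fun i => iInf_le (fun i : ℕ => P (σ i) (σ (i + 1))) (i + 1)
  have htaila : (⨅ i : ℕ, a (σ i)) ≤ ⨅ i : ℕ, a (σ (i + 1)) :=
    le_iInf fun i => iInf_le (fun i : ℕ => a (σ i)) (i + 1)
  refine le_min (ha.trans (iInf_le _ 0)) ?_
  refine le_trans ?_
    (le_iSup (fun t : S => min (P (σ 0) t) (min (alwaysSem P a t) (rP P t))) (σ 1))
  refine le_min (hP.trans (iInf_le (fun i : ℕ => P (σ i) (σ (i + 1))) 0)) (le_min ?_ ?_)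
  · exact (min_le_min htail htaila).trans (le_iSup
      (fun τ : {τ : ℕ → S // τ 0 = σ 1} => min (valP P τ.1) (⨅ i : ℕ, a (τ.1 i)))
      ⟨fun i => σ (i + 1), rfl⟩)
  · exact (hP.trans htail).trans (le_iSup
      (fun τ : {τ : ℕ → S // τ 0 = σ 1} => valP P τ.1) ⟨fun i => σ (i + 1), rfl⟩)

/-- Every fixpoint `Z` of `f` satisfies `Z ≤ A` pointwise; hence `A` is the greatest
fixpoint of `f`. -/
theorem alwaysSem_greatest_fixpoint {S : Type*} [Fintype S] [Nonempty S]
    (P : S → S → unitInterval) (a : S → unitInterval) :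
    (∀ Z : S → unitInterval, (∀ s : S, Z s = fOp P a Z s) → ∀ s : S, Z s ≤ alwaysSem P a s)
    ∧ IsGreatest {Z : S → unitInterval | fOp P a Z = Z} (alwaysSem P a) := by
  refine ⟨fun Z hZ => le_alwaysSem_of_le_fOp P a Z fun s => (hZ s).le, ?_, ?_⟩
  · funext s
    exact le_antisymm
      (le_alwaysSem_of_le_fOp P a _ (fOp_mono P a (alwaysSem_le_fOp P a)) s)
      (alwaysSem_le_fOp P a s)
  · intro Z hZ
    exact le_alwaysSem_of_le_fOp P a Z fun s => (congrFun hZ s).ge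
end

section
/- Let S be a finite nonempty set, P : S × S → [0,1] normal (sup_{t ∈ S} P(s,t) = 1 for every s), a, b : S → [0,1], and v ∈ [0,1]. Define PoU(s) := sup_{j ∈ ℕ} [ sup over all finite sequences t₀ = s, t₁, …, t_j in S of min( min_{0 ≤ k < j} min( a(t_k), P(t_k, t_{k+1}) ), b(t_j) ) ]. Then PoU(s) ≤ v if and only if b(s) ≤ v and sup{ min_{0 ≤ k < j} P(t_k, t_{k+1}) : j ∈ ℕ, t₀ = s, t₁, …, t_j ∈ S with a(t_k) > v for all 0 ≤ k < j and b(t_j) > v } ≤ v (with sup over the empty set equal to 0). -/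
/-- `PoU(s) = Po(s ⊨ Φ′ ⊔ Φ″)` for a normal `P`: the sup over `j ∈ ℕ` and finite
sequences `t₀ = s, …, t_j` of `min( min_{0≤k<j} min(a(t_k), P(t_k, t_{k+1})), b(t_j) )`. -/
noncomputable def PoUntil {S : Type*} (P : S → S → unitInterval)
    (a b : S → unitInterval) (s : S) : unitInterval :=
  ⨆ j : ℕ, ⨆ t : {t : Fin (j + 1) → S // t 0 = s},
    min (⨅ k : Fin j, min (a (t.1 k.castSucc)) (P (t.1 k.castSucc) (t.1 k.succ)))
      (b (t.1 (Fin.last j)))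

/-- Only finiteness of the index makes the infimum strictly larger than `v`; the hypothesis `v < ⊤`
covers the empty index. -/
theorem lt_iInf_fin {v : unitInterval} (hv : v < ⊤) {j : ℕ} {f : Fin j → unitInterval}
    (hf : ∀ k, v < f k) : v < ⨅ k, f k := by
  rcases isEmpty_or_nonempty (Fin j) with h | h
  · rwa [iInf_of_empty]
  · obtain ⟨k, hk⟩ := exists_eq_ciInf_of_finite (f := f)
    rw [← hk]
    exact hf k

/-- For normal `P`: `PoU(s) ≤ v` iff `b(s) ≤ v` and the sup, over finite sequences
`t₀ = s, …, t_j` with `a(t_k) > v` for all `k < j` and `b(t_j) > v`, of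
`min_{0≤k<j} P(t_k, t_{k+1})` is at most `v` (the sup over the empty set being `0`). -/
theorem until_threshold_le {S : Type*} [Fintype S] [Nonempty S]
    (P : S → S → unitInterval) (hP : ∀ s : S, (⨆ t : S, P s t) = 1)
    (a b : S → unitInterval) (v : unitInterval) (s : S) :
    PoUntil P a b s ≤ v ↔
      b s ≤ v ∧
      (⨆ j : ℕ, ⨆ t : {t : Fin (j + 1) → S //
          t 0 = s ∧ (∀ k : Fin j, v < a (t k.castSucc)) ∧ v < b (t (Fin.last j))},
        ⨅ k : Fin j, P (t.1 k.castSucc) (t.1 k.succ)) ≤ v := by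
  unfold PoUntil
  simp only [iSup_le_iff]
  constructor
  · intro h
    refine ⟨by simpa using h 0 ⟨fun _ => s, rfl⟩, ?_⟩
    rintro j ⟨t, h0, ha, hb⟩
    have hv := h j ⟨t, h0⟩
    rw [iInf_inf_eq] at hv
    by_contra! hlt
    exact hv.not_gt (lt_min (lt_min (lt_iInf_fin (hb.trans_le le_top) ha) hlt) hb)
  · rintro ⟨-, h⟩ j ⟨t, h0⟩
    by_contra! hlt
    obtain ⟨hm, hb⟩ := lt_min_iff.1 hlt
    rw [iInf_inf_eq] at hm
    obtain ⟨ha, hp⟩ := lt_min_iff.1 hm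
    exact (h j ⟨t, h0, fun k => ha.trans_le (iInf_le _ k), hb⟩).not_gt hp
end

section
/- Let S be a finite nonempty set, P : S × S → [0,1], a : S → [0,1], and u, v ∈ [0,1]. Define PoG(s) := sup over all runs σ from s of min( val_P(σ), inf_{i ≥ 0} a(σ i) ). Then: (i) PoG(s) ≥ u if and only if there exists a run σ from s with val_P(σ) ≥ u and a(σ i) ≥ u for all i ≥ 0; and (ii) PoG(s) ≤ v if and only if every run σ from s satisfying a(σ i) > v for all i ≥ 0 has val_P(σ) ≤ v. -/
/-- `PoG(s) = Po(s ⊨ □Φ′)`: the sup over runs `σ` from `s` of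
`min(val_P(σ), inf_{i≥0} a(σ i))`. -/
noncomputable def PoGlobally {S : Type*} (P : S → S → unitInterval)
    (a : S → unitInterval) (s : S) : unitInterval :=
  ⨆ σ : {σ : ℕ → S // σ 0 = s}, min (valP P σ.1) (⨅ i : ℕ, a (σ.1 i))

theorem exists_iInf_eq_of_mem_finite {F : Set unitInterval} (hF : F.Finite)
    {f : ℕ → unitInterval} (hf : ∀ i, f i ∈ F) : ∃ i, f i = ⨅ j, f j :=
  (Set.range_nonempty f).csInf_mem (hF.subset (Set.range_subset_iff.2 hf))

/-- The supremum defining `PoGlobally` is attained: every competing value is a value of `P` or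
of `a`, so only finitely many values compete. -/
theorem exists_run_eq_PoGlobally {S : Type*} [Finite S]
    (P : S → S → unitInterval) (a : S → unitInterval) (s : S) :
    ∃ σ : ℕ → S, σ 0 = s ∧ min (valP P σ) (⨅ i : ℕ, a (σ i)) = PoGlobally P a s := by
  have hP : (Set.range fun p : S × S => P p.1 p.2).Finite := Set.finite_range _
  have ha : (Set.range a).Finite := Set.finite_range _
  let g : {σ : ℕ → S // σ 0 = s} → unitInterval :=
    fun σ => min (valP P σ.1) (⨅ i : ℕ, a (σ.1 i))
  have hg : (Set.range g).Finite := by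
    refine (hP.union ha).subset (Set.range_subset_iff.2 fun σ => ?_)
    obtain ⟨i, hi⟩ := exists_iInf_eq_of_mem_finite hP
      (f := fun i => P (σ.1 i) (σ.1 (i + 1))) fun i => ⟨(σ.1 i, σ.1 (i + 1)), rfl⟩
    obtain ⟨j, hj⟩ := exists_iInf_eq_of_mem_finite ha
      (f := fun i => a (σ.1 i)) fun i => ⟨σ.1 i, rfl⟩
    rcases min_choice (valP P σ.1) (⨅ i : ℕ, a (σ.1 i)) with h | h
    · exact Or.inl ⟨(σ.1 i, σ.1 (i + 1)), hi.trans h.symm⟩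
    · exact Or.inr ⟨σ.1 j, hj.trans h.symm⟩
  have : Nonempty {σ : ℕ → S // σ 0 = s} := ⟨⟨fun _ => s, rfl⟩⟩
  obtain ⟨σ, hσ⟩ := (Set.range_nonempty g).csSup_mem hg
  exact ⟨σ.1, σ.2, hσ⟩

/-- Thresholding the always possibility (Case 6 of the PoCTL/GPoCTL comparison):
(i) `PoG(s) ≥ u` iff some run `σ` from `s` has `val_P(σ) ≥ u` and `a(σ i) ≥ u` for all `i`;
(ii) `PoG(s) ≤ v` iff every run `σ` from `s` with `a(σ i) > v` for all `i` has
`val_P(σ) ≤ v`. -/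
theorem always_threshold {S : Type*} [Fintype S] [Nonempty S]
    (P : S → S → unitInterval) (a : S → unitInterval) (u v : unitInterval) (s : S) :
    ((u ≤ PoGlobally P a s) ↔
      ∃ σ : ℕ → S, σ 0 = s ∧ u ≤ valP P σ ∧ ∀ i : ℕ, u ≤ a (σ i)) ∧
    ((PoGlobally P a s ≤ v) ↔
      ∀ σ : ℕ → S, σ 0 = s → (∀ i : ℕ, v < a (σ i)) → valP P σ ≤ v) := by
  have hle : ∀ σ : ℕ → S, σ 0 = s →
      min (valP P σ) (⨅ i : ℕ, a (σ i)) ≤ PoGlobally P a s := fun σ hσ =>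
    le_iSup (fun σ : {σ : ℕ → S // σ 0 = s} => min (valP P σ.1) (⨅ i : ℕ, a (σ.1 i))) ⟨σ, hσ⟩
  refine ⟨⟨fun h => ?_, ?_⟩, ⟨fun h σ hσ hv => ?_, fun h => iSup_le ?_⟩⟩
  · obtain ⟨σ, hσ, he⟩ := exists_run_eq_PoGlobally P a s
    rw [← he, le_min_iff] at h
    exact ⟨σ, hσ, h.1, le_iInf_iff.1 h.2⟩
  · rintro ⟨σ, hσ, hval, ha⟩
    exact (le_min hval (le_iInf ha)).trans (hle σ hσ)
  · obtain ⟨j, hj⟩ := exists_iInf_eq_of_mem_finite (Set.finite_range a)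
      (f := fun i => a (σ i)) fun i => ⟨σ i, rfl⟩
    rcases min_le_iff.1 ((hle σ hσ).trans h) with h' | h'
    · exact h'
    · exact absurd (hj.trans_le h') (hv j).not_ge
  · rintro ⟨σ, hσ⟩
    by_cases hv : ∀ i, v < a (σ i)
    · exact min_le_of_left_le (h σ hσ hv)
    · push Not at hv
      obtain ⟨i, hi⟩ := hv
      exact min_le_of_right_le ((iInf_le _ i).trans hi)
end
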